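/- For every integer m ≥ 3, the identity X^{2^{m+2}-1} + 1 = (1 + X)·f_m(X)^2 + X·f_{m-1}(X)^2·f_m(X) + X^3·f_{m-1}(X)^4·f_m(X)^4 holds in F_2[X]. -/

import Mathlib

open Polynomial

/-- `fibSet m` is the set of fibbinary integers below `2^m`: integers in `{0,…,2^m-1}`
whose binary representation has no two consecutive ones. -/
noncomputable def fibSet (m : ℕ) : Finset ℕ :=
  @Finset.filter _ (fun i => ∀ j : ℕ, ¬(i.testBit j ∧ i.testBit (j + 1)))
    (Classical.decPred _) (Finset.range (2 ^ m))

/-- The `m`-th fibbinary polynomial over `F_2`. -/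
noncomputable def fibPoly (m : ℕ) : Polynomial (ZMod 2) :=
  ∑ i ∈ fibSet m, X ^ i


lemma mem_fibSet (m i : ℕ) : i ∈ fibSet m ↔
    i < 2 ^ m ∧ ∀ j : ℕ, ¬(i.testBit j ∧ i.testBit (j + 1)) := by
  simp [fibSet]

lemma fib_double (k : ℕ) : (∀ j : ℕ, ¬((2 * k).testBit j ∧ (2 * k).testBit (j + 1))) ↔
    ∀ j : ℕ, ¬(k.testBit j ∧ k.testBit (j + 1)) := by
  constructor
  · intro h j
    have := h (j + 1)
    simpa [Nat.testBit_succ] using this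
  · intro h j
    cases j with
    | zero => simp
    | succ j => simpa [Nat.testBit_succ] using h j

lemma fib_odd (k : ℕ) : (∀ j : ℕ, ¬((2 * k + 1).testBit j ∧ (2 * k + 1).testBit (j + 1))) ↔
    k % 2 = 0 ∧ ∀ j : ℕ, ¬(k.testBit j ∧ k.testBit (j + 1)) := by
  have e : (2 * k + 1) / 2 = k := by omega
  constructor
  · intro h
    constructor
    · have := h 0
      simp [Nat.testBit_succ, e] at this
      exact this
    · intro j
      have := h (j + 1)
      rw [Nat.testBit_succ, Nat.testBit_succ, e] at this
      exact this
  · rintro ⟨h0, h⟩ j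
    cases j with
    | zero => simp [Nat.testBit_succ, e, h0]
    | succ j =>
      rw [Nat.testBit_succ, Nat.testBit_succ, e]
      exact h j

lemma fibSet_succ (m : ℕ) : fibSet (m + 2) =
    (fibSet (m + 1)).image (fun i => 2 * i) ∪ (fibSet m).image (fun i => 4 * i + 1) := by
  ext i
  simp only [Finset.mem_union, Finset.mem_image, mem_fibSet]
  have p1 : 2 ^ (m + 2) = 4 * 2 ^ m := by ring
  have p2 : 2 ^ (m + 1) = 2 * 2 ^ m := by ring
  constructor
  · rintro ⟨hi, h⟩
    rcases Nat.even_or_odd' i with ⟨k, rfl | rfl⟩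
    · left
      exact ⟨k, ⟨by omega, (fib_double k).1 h⟩, rfl⟩
    · right
      obtain ⟨h0, h1⟩ := (fib_odd k).1 h
      obtain ⟨l, rfl⟩ : ∃ l, k = 2 * l := ⟨k / 2, by omega⟩
      exact ⟨l, ⟨by omega, (fib_double l).1 h1⟩, by ring⟩
  · rintro (⟨k, ⟨hk, h⟩, rfl⟩ | ⟨l, ⟨hl, h⟩, rfl⟩)
    · exact ⟨by omega, (fib_double k).2 h⟩
    · refine ⟨by omega, ?_⟩
      have e : 4 * l + 1 = 2 * (2 * l) + 1 := by ring
      rw [e]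
      exact (fib_odd _).2 ⟨by omega, (fib_double l).2 h⟩

lemma fibPoly_sq (m : ℕ) : fibPoly m ^ 2 = ∑ i ∈ fibSet m, (X : Polynomial (ZMod 2)) ^ (2 * i) := by
  rw [fibPoly, sum_pow_char 2]
  exact Finset.sum_congr rfl fun i _ => by ring

lemma fibPoly_four (m : ℕ) :
    fibPoly m ^ 4 = ∑ i ∈ fibSet m, (X : Polynomial (ZMod 2)) ^ (4 * i) := by
  have : fibPoly m ^ 4 = (fibPoly m ^ 2) ^ 2 := by ring
  rw [this, fibPoly_sq, sum_pow_char 2]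
  exact Finset.sum_congr rfl fun i _ => by ring

lemma fibPoly_rec (m : ℕ) : fibPoly (m + 2) = fibPoly (m + 1) ^ 2 + X * fibPoly m ^ 4 := by
  rw [fibPoly_sq, fibPoly_four, fibPoly, fibSet_succ, Finset.sum_union, Finset.sum_image,
    Finset.sum_image, Finset.mul_sum]
  · congr 1
    exact Finset.sum_congr rfl fun i _ => by ring
  · intro a _ b _ h
    simp only at h
    omega
  · intro a _ b _ h
    simp only at h
    omega
  · rw [Finset.disjoint_left]
    intro a h1 h2
    simp only [Finset.mem_image] at h1 h2
    obtain ⟨b, _, h1⟩ := h1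
    obtain ⟨c, _, h2⟩ := h2
    omega

lemma fibPoly_zero : fibPoly 0 = 1 := by
  have : fibSet 0 = {0} := by
    ext i
    simp only [mem_fibSet, Finset.mem_singleton]
    constructor
    · rintro ⟨h, _⟩
      simpa using h
    · rintro rfl
      simp
  simp [fibPoly, this]

lemma fibPoly_one : fibPoly 1 = 1 + X := by
  have : fibSet 1 = {0, 1} := by
    ext i
    simp only [mem_fibSet, Finset.mem_insert, Finset.mem_singleton]
    constructor
    · rintro ⟨h, _⟩
      omega
    · rintro (rfl | rfl)
      · simp
      · simp [Nat.testBit_succ]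
  simp [fibPoly, this]

lemma two_zero : (2 : Polynomial (ZMod 2)) = 0 := CharTwo.two_eq_zero

lemma fib_inv (m : ℕ) :
    1 + fibPoly (m + 1) ^ 2 + X * fibPoly m ^ 4 + X * fibPoly (m + 1) * fibPoly m ^ 2 = 0 ∧
    X + X * (1 + X) * fibPoly (m + 1) ^ 2 + X ^ 2 * fibPoly m ^ 2 * fibPoly (m + 1) +
      X ^ 4 * fibPoly m ^ 4 * fibPoly (m + 1) ^ 4 = X ^ (2 ^ (m + 3)) := by
  have h2 := two_zero
  induction m with
  | zero =>
    rw [fibPoly_zero, fibPoly_one]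
    constructor
    · grind
    · norm_num
      grind
  | succ m ih =>
    obtain ⟨r, g⟩ := ih
    rw [fibPoly_rec m]
    have e : (X : Polynomial (ZMod 2)) ^ (2 ^ (m + 1 + 3)) = (X ^ (2 ^ (m + 3))) ^ 2 := by ring
    rw [e, ← g]
    generalize fibPoly (m + 1) = a at *
    generalize fibPoly m = b at *
    clear g e
    constructor
    · grind
    · grind

theorem split_identity (m : ℕ) (hm : 3 ≤ m) :
    (X ^ (2 ^ (m + 2) - 1) + 1 : Polynomial (ZMod 2)) =
      (1 + X) * (fibPoly m) ^ 2 + X * (fibPoly (m - 1)) ^ 2 * fibPoly m +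
        X ^ 3 * (fibPoly (m - 1)) ^ 4 * (fibPoly m) ^ 4 := by
  obtain ⟨n, rfl⟩ : ∃ n, m = n + 1 := ⟨m - 1, by omega⟩
  have h2 := two_zero
  have g := (fib_inv n).2
  have hp : 0 < 2 ^ (n + 3) := by positivity
  obtain ⟨k, hk⟩ : ∃ k, 2 ^ (n + 3) = k + 1 := ⟨2 ^ (n + 3) - 1, by omega⟩
  have e : 2 ^ (n + 1 + 2) - 1 = k := by
    have : n + 1 + 2 = n + 3 := by ring
    rw [this]
    omega
  rw [e, Nat.add_sub_cancel]
  rw [hk, pow_succ] at g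
  apply mul_left_cancel₀ (X_ne_zero : (X : Polynomial (ZMod 2)) ≠ 0)
  linear_combination (-1 : Polynomial (ZMod 2)) * g + X * h2
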